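/- arXiv:1705.03970 — 3 statements merged into one kernel-verified Lean document; each statement's English description precedes it below -/
import Mathlib

section
/- Let n ≥ 1, let N be a symmetric positive-definite n×n real matrix with eigenvalues 0 < λ_1 ≤ … ≤ λ_n, and let U, V be independent standard Gaussian random vectors on ℝⁿ. Then the law of U·NV has density s ↦ (2π)^{−1/2} ∫_{ℝⁿ} e^{−s²/(2κ(x)²)} κ(x)^{−1} d𝒩(x) with respect to Lebesgue measure on ℝ. -/
open MeasureTheory ProbabilityTheory Matrix Real
open scoped ENNReal

/-- The standard Gaussian measure on `ι → ℝ`: the centered Gaussian measure with identity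
covariance, i.e. the product of copies of `N(0,1)`. -/
noncomputable def stdGaussian (ι : Type*) [Fintype ι] : Measure (ι → ℝ) :=
  Measure.pi fun _ => gaussianReal 0 1

open scoped NNReal

/-!
Conditionally on `V = x`, the variable `U ⬝ᵥ N *ᵥ V` is a linear form in the standard Gaussian
vector `U`, hence centered Gaussian with variance `‖N x‖² = κ(x)²`. The law of `U ⬝ᵥ N *ᵥ V` is
therefore a mixture of centered Gaussians, and since `κ(x) ≠ 0` for almost every `x`, its density is
the average of the Gaussian densities. This average may be infinite at exceptional `s` (as for
`n = 1`, `s = 0`), where the Bochner integral has the junk value `0`; by Fubini such `s` form a null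
set.
-/

section Mixture

variable {X Y : Type*} [MeasurableSpace X] [MeasurableSpace Y]

lemma map_prod_eq_bind {Z : Type*} [MeasurableSpace Z] (μ : Measure X) [SFinite μ] (ν : Measure Y)
    [SFinite ν] {f : X × Y → Z} (hf : Measurable f) :
    (μ.prod ν).map f = ν.bind fun y => μ.map fun x => f (x, y) := by
  ext s hs
  have hsection (y : Y) : Measurable fun x => f (x, y) := by fun_prop
  have hmeas : Measurable fun y => μ.map fun x => f (x, y) := by
    refine Measure.measurable_of_measurable_coe _ fun t ht => ?_
    simp_rw [Measure.map_apply (hsection _) ht]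
    exact measurable_measure_prodMk_right (hf ht)
  rw [Measure.map_apply hf hs, Measure.prod_apply_symm (hf hs),
    Measure.bind_apply hs hmeas.aemeasurable]
  simp_rw [Measure.map_apply (hsection _) hs]
  rfl

lemma bind_withDensity (μ : Measure X) [SFinite μ] (ν : Measure Y) [SFinite ν]
    {f : Y → X → ℝ≥0∞} (hf : Measurable (Function.uncurry f)) :
    ν.bind (fun y => μ.withDensity (f y)) = μ.withDensity fun x => ∫⁻ y, f y x ∂ν := by
  ext s hs
  have hmeas : Measurable fun y => μ.withDensity (f y) := by
    refine Measure.measurable_of_measurable_coe _ fun t ht => ?_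
    simp_rw [withDensity_apply _ ht]
    exact hf.lintegral_prod_right
  rw [Measure.bind_apply hs hmeas.aemeasurable, withDensity_apply _ hs]
  simp_rw [withDensity_apply _ hs]
  exact lintegral_lintegral_swap hf.aemeasurable

lemma withDensity_lintegral_ofReal {μ : Measure X} [SFinite μ] {ν : Measure Y} [SFinite ν]
    {f : X → Y → ℝ} (hf : Integrable (Function.uncurry f) (μ.prod ν)) (hf₀ : ∀ x y, 0 ≤ f x y) :
    μ.withDensity (fun x => ∫⁻ y, ENNReal.ofReal (f x y) ∂ν) =
      μ.withDensity fun x => ENNReal.ofReal (∫ y, f x y ∂ν) := by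
  refine withDensity_congr_ae ?_
  filter_upwards [hf.prod_right_ae] with x hx
  exact (ofReal_integral_eq_lintegral_ofReal hx (ae_of_all _ (hf₀ x))).symm

end Mixture

section GaussianMixture

variable {Y : Type*} [MeasurableSpace Y] {m : Y → ℝ} {v : Y → ℝ≥0} (ν : Measure Y)
  [IsFiniteMeasure ν]

lemma integrable_uncurry_gaussianPDFReal (hm : Measurable m) (hv : Measurable v)
    (hv₀ : ∀ᵐ y ∂ν, v y ≠ 0) :
    Integrable (Function.uncurry fun s y => gaussianPDFReal (m y) (v y) s) (volume.prod ν) := by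
  have hmeas : Measurable (Function.uncurry fun s y => gaussianPDFReal (m y) (v y) s) :=
    measurable_uncurry_gaussianPDFReal.comp
      ((hm.comp measurable_snd).prodMk ((hv.comp measurable_snd).prodMk measurable_fst))
  refine (integrable_prod_iff' hmeas.aestronglyMeasurable).mpr
    ⟨ae_of_all _ fun y => integrable_gaussianPDFReal (m y) (v y), ?_⟩
  have hone : ∀ᵐ y ∂ν, ∫ s, ‖gaussianPDFReal (m y) (v y) s‖ = 1 := by
    filter_upwards [hv₀] with y hy
    simp_rw [Real.norm_of_nonneg (gaussianPDFReal_nonneg _ _ _)]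
    exact integral_gaussianPDFReal_eq_one (m y) hy
  exact (integrable_congr hone).mpr (integrable_const 1)

lemma bind_gaussianReal_eq_withDensity (hm : Measurable m) (hv : Measurable v)
    (hv₀ : ∀ᵐ y ∂ν, v y ≠ 0) :
    ν.bind (fun y => gaussianReal (m y) (v y)) =
      volume.withDensity fun s => ENNReal.ofReal (∫ y, gaussianPDFReal (m y) (v y) s ∂ν) := by
  have hmeas : Measurable (Function.uncurry fun y s => gaussianPDF (m y) (v y) s) :=
    measurable_uncurry_gaussianPDF.comp
      ((hm.comp measurable_fst).prodMk ((hv.comp measurable_fst).prodMk measurable_snd))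
  calc ν.bind (fun y => gaussianReal (m y) (v y))
      = ν.bind (fun y => volume.withDensity (gaussianPDF (m y) (v y))) :=
        Measure.bind_congr_right <| hv₀.mono fun _ hy => gaussianReal_of_var_ne_zero _ hy
    _ = volume.withDensity (fun s => ∫⁻ y, gaussianPDF (m y) (v y) s ∂ν) :=
        bind_withDensity _ _ hmeas
    _ = volume.withDensity fun s => ENNReal.ofReal (∫ y, gaussianPDFReal (m y) (v y) s ∂ν) :=
        withDensity_lintegral_ofReal (integrable_uncurry_gaussianPDFReal ν hm hv hv₀)
          fun _ _ => gaussianPDFReal_nonneg _ _ _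

end GaussianMixture

lemma gaussianPDFReal_zero_eq (v : ℝ≥0) (s : ℝ) :
    gaussianPDFReal 0 v s =
      (2 * π) ^ (-(1 : ℝ) / 2) * (Real.exp (-s ^ 2 / (2 * √v ^ 2)) * (√v)⁻¹) := by
  rw [gaussianPDFReal, sub_zero, Real.sq_sqrt v.coe_nonneg, Real.sqrt_mul (by positivity),
    mul_inv, neg_div 2 (1 : ℝ), Real.rpow_neg (by positivity), ← Real.sqrt_eq_rpow]
  ring

section StdGaussian

variable {ι Ω : Type*} [Fintype ι] [MeasurableSpace Ω] {P : Measure Ω}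

instance : IsProbabilityMeasure (_root_.stdGaussian ι) := by
  unfold _root_.stdGaussian
  infer_instance

lemma map_dotProduct_stdGaussian (w : ι → ℝ) :
    (_root_.stdGaussian ι).map (fun u => u ⬝ᵥ w) = gaussianReal 0 (w ⬝ᵥ w).toNNReal := by
  let L : StrongDual ℝ (EuclideanSpace ℝ ι) := innerSL ℝ (WithLp.toLp 2 w)
  have hnorm : ‖L‖ ^ 2 = w ⬝ᵥ w := by
    simp only [L, innerSL_apply_norm, EuclideanSpace.real_norm_sq_eq]
    exact Finset.sum_congr rfl fun i _ => sq (w i)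
  calc (_root_.stdGaussian ι).map (fun u => u ⬝ᵥ w)
      = ((_root_.stdGaussian ι).map (WithLp.toLp 2)).map L := by
        rw [Measure.map_map (by fun_prop) (by fun_prop)]
        rfl
    _ = gaussianReal 0 (w ⬝ᵥ w).toNNReal := by
        rw [_root_.stdGaussian, map_pi_eq_stdGaussian, IsGaussian.map_eq_gaussianReal,
          integral_strongDual_stdGaussian, variance_dual_stdGaussian, hnorm]

lemma toNNReal_dotProduct_self_ne_zero {w : ι → ℝ} (hw : w ≠ 0) : (w ⬝ᵥ w).toNNReal ≠ 0 :=
  (Real.toNNReal_pos.mpr (dotProduct_self_star_pos_iff.mpr hw)).ne'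

lemma ae_dotProduct_ne_zero {w : ι → ℝ} (hw : w ≠ 0) :
    ∀ᵐ x ∂_root_.stdGaussian ι, x ⬝ᵥ w ≠ 0 := by
  have := nullSingletonClass_gaussianReal (μ := 0) (toNNReal_dotProduct_self_ne_zero hw)
  refine ae_of_ae_map (f := fun x => x ⬝ᵥ w) (p := (· ≠ 0)) (by fun_prop) ?_
  rw [map_dotProduct_stdGaussian]
  exact Measure.ae_ne _ 0

lemma ae_mulVec_ne_zero {m : Type*} {A : Matrix m ι ℝ} (hA : A ≠ 0) :
    ∀ᵐ x ∂_root_.stdGaussian ι, A *ᵥ x ≠ 0 := by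
  obtain ⟨i, hi⟩ := Function.ne_iff.mp hA
  filter_upwards [ae_dotProduct_ne_zero hi] with x hx hAx
  exact hx ((dotProduct_comm _ _).trans (congrFun hAx i))

lemma hasLaw_dotProduct_of_indepFun {Y : Type*} [MeasurableSpace Y] {ν : Measure Y}
    {U : Ω → ι → ℝ} {V : Ω → Y} {w : Y → ι → ℝ} (hU : HasLaw U (_root_.stdGaussian ι) P)
    (hV : HasLaw V ν P) (hUV : IndepFun U V P) (hw : Measurable w) :
    HasLaw (fun ω => U ω ⬝ᵥ w (V ω))
      (ν.bind fun y => gaussianReal 0 (w y ⬝ᵥ w y).toNNReal) P := by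
  have := hU.isProbabilityMeasure
  have := hV.isProbabilityMeasure_iff.mp this
  have hf : Measurable fun p : (ι → ℝ) × Y => p.1 ⬝ᵥ w p.2 := by
    unfold dotProduct
    fun_prop
  simp_rw [← map_dotProduct_stdGaussian, ← map_prod_eq_bind _ _ hf]
  have hdot : HasLaw (fun p : (ι → ℝ) × Y => p.1 ⬝ᵥ w p.2) _ ((_root_.stdGaussian ι).prod ν) :=
    ⟨hf.aemeasurable, rfl⟩
  exact hdot.comp (hUV.hasLaw_prod hU hV)

end StdGaussian

lemma mulVec_dotProduct_mulVec_self {m n R : Type*} [Fintype m] [Fintype n] [CommSemiring R]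
    (A : Matrix m n R) (x : n → R) : A *ᵥ x ⬝ᵥ A *ᵥ x = x ⬝ᵥ (Aᵀ * A) *ᵥ x := by
  rw [← mulVec_mulVec, dotProduct_mulVec x, vecMul_transpose]

theorem stmt_2_general {Ω m n : Type*} [MeasurableSpace Ω] {P : Measure Ω} [Fintype m] [Fintype n]
    {A : Matrix m n ℝ} (hA : A ≠ 0) {U : Ω → m → ℝ} {V : Ω → n → ℝ}
    (hU : HasLaw U (_root_.stdGaussian m) P) (hV : HasLaw V (_root_.stdGaussian n) P)
    (hUV : IndepFun U V P) :
    HasLaw (fun ω => U ω ⬝ᵥ A *ᵥ V ω)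
      (volume.withDensity fun s => ENNReal.ofReal
        ((2 * π) ^ (-(1 : ℝ) / 2) *
          ∫ x, Real.exp (-s ^ 2 / (2 * √(x ⬝ᵥ (Aᵀ * A) *ᵥ x) ^ 2)) *
            (√(x ⬝ᵥ (Aᵀ * A) *ᵥ x))⁻¹ ∂_root_.stdGaussian n)) P := by
  have hvar : ∀ᵐ x ∂_root_.stdGaussian n, (A *ᵥ x ⬝ᵥ A *ᵥ x).toNNReal ≠ 0 :=
    (ae_mulVec_ne_zero hA).mono fun _ => toNNReal_dotProduct_self_ne_zero
  have hlaw := hasLaw_dotProduct_of_indepFun hU hV hUV (w := (A *ᵥ ·)) (by fun_prop)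
  rw [bind_gaussianReal_eq_withDensity _ measurable_const (by fun_prop) hvar] at hlaw
  have hnonneg (x : n → ℝ) : 0 ≤ x ⬝ᵥ (Aᵀ * A) *ᵥ x :=
    mulVec_dotProduct_mulVec_self A x ▸ dotProduct_self_star_nonneg (A *ᵥ x)
  simpa only [gaussianPDFReal_zero_eq, Real.coe_toNNReal _ (hnonneg _), integral_const_mul,
    mulVec_dotProduct_mulVec_self] using hlaw

/-- Let `n ≥ 1`, let `N` be a symmetric positive-definite `n×n` real
matrix with eigenvalues `0 < λ₁ ≤ … ≤ λ_n`, and let `U, V` be independent standard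
Gaussian random vectors on `ℝⁿ`.  Then the law of `U·NV` has density
`s ↦ (2π)^{−1/2} ∫ e^{−s²/(2κ(x)²)} κ(x)^{−1} d𝒩(x)` w.r.t. Lebesgue measure on `ℝ`.
Here `κ(x) = (Σ_j λ_j² x_j²)^{1/2}` (in an orthonormal eigenbasis of `N`), which, as a
basis-independent quadratic expression, equals `(x·N²x)^{1/2}`. -/
theorem stmt_2 {Ω : Type*} [MeasurableSpace Ω] (P : Measure Ω) [IsProbabilityMeasure P]
    (n : ℕ) (hn : 1 ≤ n) (N : Matrix (Fin n) (Fin n) ℝ) (hN : N.PosDef)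
    (U V : Ω → (Fin n → ℝ)) (hU : Measurable U) (hV : Measurable V)
    (hUlaw : P.map U = stdGaussian (Fin n)) (hVlaw : P.map V = stdGaussian (Fin n))
    (hUV : IndepFun U V P) :
    P.map (fun ω => U ω ⬝ᵥ N *ᵥ V ω) =
      (volume : Measure ℝ).withDensity (fun s => ENNReal.ofReal
        ((2 * π) ^ (-(1 : ℝ) / 2) *
          ∫ x, Real.exp (-s ^ 2 / (2 * Real.sqrt (x ⬝ᵥ (N * N) *ᵥ x) ^ 2)) *
            (Real.sqrt (x ⬝ᵥ (N * N) *ᵥ x))⁻¹ ∂(stdGaussian (Fin n)))) := by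
  have : Nonempty (Fin n) := ⟨⟨0, hn⟩⟩
  simpa only [(isHermitian_iff_isSymm.mp hN.isHermitian).eq] using
    (stmt_2_general hN.isUnit.ne_zero ⟨hU.aemeasurable, hUlaw⟩ ⟨hV.aemeasurable, hVlaw⟩ hUV).map_eq
end

section
/- Let n ≥ 1, λ > 0, and let U, V be independent standard Gaussian random vectors on ℝⁿ. Then the law of λ U·V has density f(s) = |S^{n−1}| K_{(n−1)/2}(|s|/λ) |s|^{(n−1)/2} / (2πλ)^{(n+1)/2}, where |S^{n−1}| = 2π^{n/2}/Γ(n/2) is the surface area of the unit sphere in ℝⁿ. -/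
open MeasureTheory ProbabilityTheory Matrix Real
open scoped ENNReal

/-- The modified Bessel function of the second kind:
`K_ν(z) = ∫_0^∞ e^{−z cosh t} cosh(νt) dt` (for real `ν` and `z > 0`). -/
noncomputable def besselK (ν z : ℝ) : ℝ :=
  ∫ t in Set.Ioi (0 : ℝ), Real.exp (-(z * Real.cosh t)) * Real.cosh (ν * t)

/-!
Given `V`, the variable `c * ⟪U, V⟫` is centered Gaussian with variance `c² ‖V‖²`, so its
characteristic function at `t` is the expectation of `exp (-(c t)² ‖V‖² / 2)`, which is
`(1 + (c t)²) ^ (-n / 2)`. A centered Gaussian variable whose variance is gamma distributed with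
shape `n / 2` and rate `1 / (2 c²)` has the same characteristic function, by the Laplace transform
of the gamma law, hence the same law. Its density at `s ≠ 0` is the gamma-weighted integral of the
densities of `N(0, v)`; up to constants, the substitution `v = |c| |s| exp t` turns this integral
into `∫ exp (ν t - |s / c| cosh t) dt = 2 K_ν(|s / c|)` with `ν = (n - 1) / 2`.
-/

lemma one_add_sq_div_two_le_cosh (t : ℝ) : 1 + t ^ 2 / 2 ≤ cosh t := by
  have abs_half_le : |t / 2| ≤ |sinh (t / 2)| := by
    rw [abs_sinh]
    exact self_le_sinh_iff.2 (abs_nonneg _)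
  have half_angle : cosh t = 2 * sinh (t / 2) ^ 2 + 1 := by
    rw [← mul_div_cancel₀ t two_ne_zero, cosh_two_mul, cosh_sq, mul_div_cancel₀ t two_ne_zero]
    ring
  linarith [sq_le_sq.2 abs_half_le]

lemma integrable_exp_mul_exp_neg_mul_cosh (ν : ℝ) {a : ℝ} (ha : 0 < a) :
    Integrable fun t ↦ exp (ν * t) * exp (-(a * cosh t)) := by
  have gaussian_integrable :
      Integrable fun t ↦ exp (ν ^ 2 / a) * exp (-(a / 4) * t ^ 2) :=
    (integrable_exp_neg_mul_sq (by positivity)).const_mul _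
  refine gaussian_integrable.mono' (by fun_prop) (.of_forall fun t ↦ ?_)
  rw [norm_of_nonneg (by positivity), ← exp_add, ← exp_add, exp_le_exp]
  have cosh_bound : a * (t ^ 2 / 2) ≤ a * cosh t := by
    gcongr
    linarith [one_add_sq_div_two_le_cosh t]
  have completed_square :
      ν ^ 2 / a - ν * t + a / 4 * t ^ 2 = 1 / a * (ν - a / 2 * t) ^ 2 := by
    field_simp
    ring
  have : 0 ≤ 1 / a * (ν - a / 2 * t) ^ 2 := by positivity
  linarith

lemma integral_exp_mul_exp_neg_mul_cosh (ν : ℝ) {a : ℝ} (ha : 0 < a) :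
    ∫ t, exp (ν * t) * exp (-(a * cosh t)) = 2 * besselK ν a := by
  have integrable := integrable_exp_mul_exp_neg_mul_cosh ν ha
  have reflect := integral_comp_neg_Ioi 0 fun t ↦ exp (ν * t) * exp (-(a * cosh t))
  rw [neg_zero] at reflect
  rw [← intervalIntegral.integral_Iic_add_Ioi integrable.integrableOn integrable.integrableOn,
    ← reflect, ← integral_add integrable.comp_neg.integrableOn integrable.integrableOn, besselK,
    ← integral_const_mul]
  congr with t
  rw [cosh_neg, cosh_eq (ν * t), mul_neg]
  ring

lemma lintegral_Ioi_eq_lintegral_mul_exp {b : ℝ} (hb : 0 < b) (f : ℝ → ℝ≥0∞) :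
    ∫⁻ x in Set.Ioi 0, f x = ∫⁻ t, ENNReal.ofReal (b * exp t) * f (b * exp t) := by
  have image_eq : (fun t ↦ b * exp t) '' Set.univ = Set.Ioi 0 := by
    rw [← Function.comp_def (b * ·) exp, Set.image_comp, Set.image_univ, range_exp,
      Set.image_mul_left_Ioi hb, mul_zero]
  have injective : Function.Injective fun t ↦ b * exp t :=
    (mul_right_injective₀ hb.ne').comp exp_injective
  rw [← image_eq, lintegral_image_eq_lintegral_abs_deriv_mul .univ
    (fun t _ ↦ ((hasDerivAt_exp t).const_mul b).hasDerivWithinAt) injective.injOn,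
    Measure.restrict_univ]
  simp only [abs_of_pos (mul_pos hb (exp_pos _))]

lemma lintegral_rpow_mul_exp_neg_eq_besselK (ν : ℝ) {a b : ℝ} (ha : 0 < a) (hb : 0 < b) :
    ∫⁻ x in Set.Ioi 0, ENNReal.ofReal (x ^ (ν - 1) * exp (-(a * ((x / b + b / x) / 2)))) =
      ENNReal.ofReal (2 * b ^ ν * besselK ν a) := by
  have integrand_eq (t : ℝ) : ENNReal.ofReal (b * exp t) *
      ENNReal.ofReal ((b * exp t) ^ (ν - 1) *
        exp (-(a * ((b * exp t / b + b / (b * exp t)) / 2)))) =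
      ENNReal.ofReal (b ^ ν * (exp (ν * t) * exp (-(a * cosh t)))) := by
    have power_eq : b * exp t * (b * exp t) ^ (ν - 1) = b ^ ν * exp (ν * t) := by
      rw [rpow_sub_one (by positivity), mul_div_cancel₀ _ (by positivity),
        mul_rpow hb.le (exp_pos t).le, ← exp_mul, mul_comm t]
    have cosh_arg : (b * exp t / b + b / (b * exp t)) / 2 = cosh t := by
      rw [cosh_eq, Real.exp_neg]
      field_simp
    rw [← ENNReal.ofReal_mul (by positivity), cosh_arg, ← mul_assoc, power_eq, mul_assoc]
  rw [lintegral_Ioi_eq_lintegral_mul_exp hb]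
  simp_rw [integrand_eq]
  rw [← ofReal_integral_eq_lintegral_ofReal
      ((integrable_exp_mul_exp_neg_mul_cosh ν ha).const_mul _)
      (.of_forall fun t ↦ by positivity),
    integral_const_mul, integral_exp_mul_exp_neg_mul_cosh ν ha]
  congr 1
  ring

lemma bind_withDensity_s3 {α β : Type*} [MeasurableSpace α] [MeasurableSpace β]
    (μ : Measure α) [SFinite μ] (ν : Measure β) [SFinite ν] {f : α → β → ℝ≥0∞}
    (hf : Measurable (Function.uncurry f)) :
    (μ.bind fun a ↦ ν.withDensity (f a)) = ν.withDensity fun b ↦ ∫⁻ a, f a b ∂μ := by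
  have measurable_withDensity : Measurable fun a ↦ ν.withDensity (f a) := by
    refine Measure.measurable_of_measurable_coe _ fun s hs ↦ ?_
    simp_rw [withDensity_apply _ hs]
    exact hf.lintegral_prod_right'
  ext s hs
  rw [Measure.bind_apply hs measurable_withDensity.aemeasurable, withDensity_apply _ hs]
  simp_rw [withDensity_apply _ hs]
  exact lintegral_lintegral_swap hf.aemeasurable

lemma charFun_comp {α E : Type*} [MeasurableSpace α] [SeminormedAddCommGroup E]
    [InnerProductSpace ℝ E] [MeasurableSpace E] [BorelSpace E] [SecondCountableTopology E]
    (κ : Kernel α E) [IsFiniteKernel κ] (μ : Measure α) [IsFiniteMeasure μ] (t : E) :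
    charFun (κ ∘ₘ μ) t = ∫ a, charFun (κ a) t ∂μ := by
  have integrable_character :
      Integrable (fun x ↦ Complex.exp (inner ℝ x t * Complex.I)) (κ ∘ₘ μ) := by
    refine .of_bound (by fun_prop) 1 (.of_forall fun x ↦ ?_)
    rw [Complex.norm_exp_ofReal_mul_I]
  rw [Measure.comp_eq_comp_const_apply] at integrable_character ⊢
  simp_rw [charFun_apply]
  rw [Kernel.integral_comp integrable_character, Kernel.const_apply]

/-- The Markov kernel `v ↦ N(0, v)`, with a negative variance read as `0`. Composing it with a law
of variances gives a scale mixture of centered Gaussian laws. -/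
noncomputable def centeredGaussianKernel : Kernel ℝ ℝ where
  toFun v := gaussianReal 0 v.toNNReal
  measurable' := measurable_gaussianReal.comp (measurable_const.prodMk measurable_real_toNNReal)

lemma centeredGaussianKernel_apply (v : ℝ) :
    centeredGaussianKernel v = gaussianReal 0 v.toNNReal := rfl

instance : IsMarkovKernel centeredGaussianKernel :=
  ⟨fun v ↦ by rw [centeredGaussianKernel_apply]; infer_instance⟩

lemma charFun_centeredGaussianKernel_comp {μ : Measure ℝ} [IsFiniteMeasure μ]
    (hμ : ∀ᵐ v ∂μ, 0 ≤ v) (t : ℝ) :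
    charFun (centeredGaussianKernel ∘ₘ μ) t = ∫ v, exp (-(t ^ 2 / 2 * v)) ∂μ := by
  rw [charFun_comp, ← integral_complex_ofReal]
  refine integral_congr_ae ?_
  filter_upwards [hμ] with v hv
  rw [centeredGaussianKernel_apply, charFun_gaussianReal, coe_toNNReal v hv]
  push_cast
  ring_nf

lemma gammaMeasure_eq_withDensity_restrict (a r : ℝ) :
    gammaMeasure a r = (volume.restrict (Set.Ioi 0)).withDensity fun x ↦
      ENNReal.ofReal (r ^ a / Gamma a * (x ^ (a - 1) * exp (-(r * x)))) := by
  rw [gammaMeasure, ← withDensity_indicator measurableSet_Ioi]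
  refine withDensity_congr_ae ?_
  filter_upwards [volume.ae_ne 0] with x hx
  rcases hx.lt_or_gt with hneg | hpos
  · rw [gammaPDF_of_neg hneg, Set.indicator_of_notMem (Set.notMem_Ioi.2 hneg.le)]
  · rw [gammaPDF_of_nonneg hpos.le, Set.indicator_of_mem (Set.mem_Ioi.2 hpos), mul_assoc]

lemma ae_pos_gammaMeasure (a r : ℝ) : ∀ᵐ x ∂gammaMeasure a r, 0 < x := by
  rw [gammaMeasure_eq_withDensity_restrict]
  exact withDensity_absolutelyContinuous _ _ (ae_restrict_mem measurableSet_Ioi)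

lemma integral_exp_neg_mul_gammaMeasure {a r s : ℝ} (ha : 0 < a) (hr : 0 < r) (hs : 0 < r + s) :
    ∫ x, exp (-(s * x)) ∂gammaMeasure a r = (r / (r + s)) ^ a := by
  rw [gammaMeasure_eq_withDensity_restrict,
    integral_withDensity_eq_integral_toReal_smul (by fun_prop) (by simp)]
  have : 0 < Gamma a := Gamma_pos_of_pos ha
  have integrand_eq (x : ℝ) (hx : 0 < x) :
      (ENNReal.ofReal (r ^ a / Gamma a * (x ^ (a - 1) * exp (-(r * x))))).toReal •
        exp (-(s * x)) = r ^ a / Gamma a * (x ^ (a - 1) * exp (-((r + s) * x))) := by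
    rw [ENNReal.toReal_ofReal (by positivity), add_mul, neg_add, exp_add, smul_eq_mul]
    ring
  rw [setIntegral_congr_fun measurableSet_Ioi integrand_eq, integral_const_mul,
    integral_rpow_mul_exp_neg_mul_Ioi ha hs, one_div, inv_rpow hs.le, div_rpow hr.le hs.le]
  field_simp

/-- The density of the centered, symmetric variance-gamma law with shape `α` and scale `σ`: the
law of a centered Gaussian variable whose variance is gamma distributed with shape `α` and mean
`2 * σ ^ 2 * α`. At `s = 0` the formula takes the junk value `0`. -/
noncomputable def varianceGammaPDFReal (α σ s : ℝ) : ℝ :=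
  2 * π ^ α / Gamma α * besselK (α - 1 / 2) (|s| / σ) * |s| ^ (α - 1 / 2) /
    (2 * π * σ) ^ (α + 1 / 2)

lemma gammaPDF_mul_gaussianPDFReal_eq {α σ s v : ℝ} (hσ : 0 < σ) (hs : s ≠ 0) (hv : 0 < v) :
    (2 * σ ^ 2)⁻¹ ^ α / Gamma α * (v ^ (α - 1) * exp (-((2 * σ ^ 2)⁻¹ * v))) *
        gaussianPDFReal 0 v.toNNReal s =
      (2 * σ ^ 2)⁻¹ ^ α / (Gamma α * √(2 * π)) * (v ^ (α - 1 / 2 - 1) *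
        exp (-(|s| / σ * ((v / (σ * |s|) + σ * |s| / v) / 2)))) := by
  have exponent_eq : |s| / σ * ((v / (σ * |s|) + σ * |s| / v) / 2) =
      (2 * σ ^ 2)⁻¹ * v + s ^ 2 / (2 * v) := by
    have : 0 < |s| := abs_pos.2 hs
    rw [← sq_abs s]
    field_simp
  have power_eq : v ^ (α - 1 / 2 - 1) = v ^ (α - 1) / √v := by
    rw [sqrt_eq_rpow, ← rpow_sub hv]
    ring_nf
  rw [gaussianPDFReal, coe_toNNReal v hv.le, sub_zero, exponent_eq, power_eq, neg_add, exp_add,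
    sqrt_mul (by positivity), neg_div]
  ring

lemma varianceGammaPDFReal_eq_rate_rpow_mul {α σ : ℝ} (hσ : 0 < σ) (s : ℝ) :
    varianceGammaPDFReal α σ s = (2 * σ ^ 2)⁻¹ ^ α / (Gamma α * √(2 * π)) *
      (2 * (σ * |s|) ^ (α - 1 / 2) * besselK (α - 1 / 2) (|s| / σ)) := by
  have scale_power : (2 * π * σ) ^ (α + 1 / 2) = 2 ^ α * π ^ α * σ ^ α * (√(2 * π) * √σ) := by
    rw [rpow_add (by positivity), ← sqrt_eq_rpow, sqrt_mul (by positivity),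
      mul_rpow (by positivity) hσ.le, mul_rpow two_pos.le pi_pos.le]
  have rate_power : (2 * σ ^ 2)⁻¹ ^ α = (2 ^ α * (σ ^ α * σ ^ α))⁻¹ := by
    rw [inv_rpow (by positivity), sq, mul_rpow two_pos.le (by positivity), mul_rpow hσ.le hσ.le]
  have spread_power : (σ * |s|) ^ (α - 1 / 2) = σ ^ α / √σ * |s| ^ (α - 1 / 2) := by
    rw [mul_rpow hσ.le (abs_nonneg s), rpow_sub hσ, ← sqrt_eq_rpow]
  rw [varianceGammaPDFReal, scale_power, rate_power, spread_power]
  field_simp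

lemma lintegral_gaussianPDF_gammaMeasure {α σ s : ℝ} (hα : 0 < α) (hσ : 0 < σ) (hs : s ≠ 0) :
    ∫⁻ v, gaussianPDF 0 v.toNNReal s ∂gammaMeasure α (2 * σ ^ 2)⁻¹ =
      ENNReal.ofReal (varianceGammaPDFReal α σ s) := by
  have : 0 < |s| := abs_pos.2 hs
  have : 0 < Gamma α := Gamma_pos_of_pos hα
  have integrand_eq (v : ℝ) (hv : 0 < v) :
      ENNReal.ofReal
          ((2 * σ ^ 2)⁻¹ ^ α / Gamma α * (v ^ (α - 1) * exp (-((2 * σ ^ 2)⁻¹ * v)))) *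
        gaussianPDF 0 v.toNNReal s =
      ENNReal.ofReal ((2 * σ ^ 2)⁻¹ ^ α / (Gamma α * √(2 * π))) *
        ENNReal.ofReal (v ^ (α - 1 / 2 - 1) *
          exp (-(|s| / σ * ((v / (σ * |s|) + σ * |s| / v) / 2)))) := by
    rw [gaussianPDF, ← ENNReal.ofReal_mul (by positivity), ← ENNReal.ofReal_mul (by positivity),
      gammaPDF_mul_gaussianPDFReal_eq hσ hs hv]
  rw [gammaMeasure_eq_withDensity_restrict,
    lintegral_withDensity_eq_lintegral_mul _ (by fun_prop) (by fun_prop)]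
  simp only [Pi.mul_apply]
  rw [setLIntegral_congr_fun measurableSet_Ioi integrand_eq, lintegral_const_mul _ (by fun_prop),
    lintegral_rpow_mul_exp_neg_eq_besselK _ (by positivity) (by positivity),
    ← ENNReal.ofReal_mul (by positivity), varianceGammaPDFReal_eq_rate_rpow_mul hσ]

lemma centeredGaussianKernel_comp_gammaMeasure {α σ : ℝ} (hα : 0 < α) (hσ : 0 < σ) :
    centeredGaussianKernel ∘ₘ gammaMeasure α (2 * σ ^ 2)⁻¹ =
      volume.withDensity fun s ↦ ENNReal.ofReal (varianceGammaPDFReal α σ s) := by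
  have rate_pos : 0 < (2 * σ ^ 2)⁻¹ := by positivity
  have := isProbabilityMeasure_gammaMeasure hα rate_pos
  have kernel_eq : centeredGaussianKernel =ᵐ[gammaMeasure α (2 * σ ^ 2)⁻¹]
      fun v ↦ volume.withDensity (gaussianPDF 0 v.toNNReal) := by
    filter_upwards [ae_pos_gammaMeasure α (2 * σ ^ 2)⁻¹] with v hv
    rw [centeredGaussianKernel_apply, gaussianReal_of_var_ne_zero _ (toNNReal_pos.2 hv).ne']
  have measurable_density :
      Measurable (Function.uncurry fun v : ℝ ↦ gaussianPDF 0 v.toNNReal) := by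
    unfold Function.uncurry
    fun_prop
  rw [Measure.bind_congr_right kernel_eq, bind_withDensity_s3 _ _ measurable_density]
  refine withDensity_congr_ae ?_
  filter_upwards [volume.ae_ne 0] with s hs using lintegral_gaussianPDF_gammaMeasure hα hσ hs

lemma charFun_centeredGaussianKernel_comp_gammaMeasure {α σ : ℝ} (hα : 0 < α)
    (hσ : 0 < σ) (t : ℝ) :
    charFun (centeredGaussianKernel ∘ₘ gammaMeasure α (2 * σ ^ 2)⁻¹) t =
      ((1 + (σ * t) ^ 2) ^ (-α) : ℝ) := by
  have rate_pos : 0 < (2 * σ ^ 2)⁻¹ := by positivity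
  have := isProbabilityMeasure_gammaMeasure hα rate_pos
  rw [charFun_centeredGaussianKernel_comp ((ae_pos_gammaMeasure _ _).mono fun _ ↦ le_of_lt),
    integral_exp_neg_mul_gammaMeasure hα rate_pos (by positivity), rpow_neg (by positivity),
    ← inv_rpow (by positivity)]
  congr 2
  field_simp

lemma integral_exp_neg_mul_sq_gaussianReal {s : ℝ} (hs : 0 < 1 + 2 * s) :
    ∫ x, exp (-(s * x ^ 2)) ∂gaussianReal 0 1 = (1 + 2 * s) ^ (-(1 / 2) : ℝ) := by
  have integrand_eq (x : ℝ) : gaussianPDFReal 0 1 x • exp (-(s * x ^ 2)) =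
      (√(2 * π))⁻¹ * exp (-((1 + 2 * s) / 2) * x ^ 2) := by
    rw [gaussianPDFReal, smul_eq_mul, mul_assoc, ← exp_add, NNReal.coe_one]
    ring_nf
  simp_rw [integral_gaussianReal_eq_integral_smul one_ne_zero, integrand_eq]
  rw [integral_const_mul, integral_gaussian, rpow_neg hs.le, ← sqrt_eq_rpow,
    div_div_eq_mul_div, mul_comm π 2, sqrt_div (by positivity)]
  field_simp

section StandardGaussian

variable {E : Type*} [NormedAddCommGroup E] [InnerProductSpace ℝ E] [FiniteDimensional ℝ E]
  [MeasurableSpace E] [BorelSpace E]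

lemma integral_exp_neg_mul_sq_norm_stdGaussian {s : ℝ} (hs : 0 < 1 + 2 * s) :
    ∫ v, exp (-(s * ‖v‖ ^ 2)) ∂ProbabilityTheory.stdGaussian E =
      (1 + 2 * s) ^ (-(Module.finrank ℝ E / 2) : ℝ) := by
  have sq_norm_eq (x : Fin (Module.finrank ℝ E) → ℝ) :
      ‖∑ i, x i • stdOrthonormalBasis ℝ E i‖ ^ 2 = ∑ i, x i ^ 2 := by
    rw [← real_inner_self_eq_norm_sq, (stdOrthonormalBasis ℝ E).orthonormal.inner_sum]
    simp [sq]
  rw [ProbabilityTheory.stdGaussian,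
    integral_map (Measurable.aemeasurable (by fun_prop)) (by fun_prop)]
  simp_rw [sq_norm_eq, Finset.mul_sum, ← Finset.sum_neg_distrib, exp_sum,
    integral_fintype_prod_eq_prod (f := fun _ x ↦ exp (-(s * x ^ 2))),
    integral_exp_neg_mul_sq_gaussianReal hs, Finset.prod_const, Finset.card_univ, Fintype.card_fin,
    ← rpow_mul_natCast hs.le]
  ring_nf

lemma charFun_map_mul_inner_stdGaussian_prod (c t : ℝ) :
    charFun (((ProbabilityTheory.stdGaussian E).prod (ProbabilityTheory.stdGaussian E)).map
        fun p ↦ c * inner ℝ p.1 p.2) t =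
      ((1 + (c * t) ^ 2) ^ (-(Module.finrank ℝ E / 2) : ℝ) : ℝ) := by
  have slice (v : E) : ∫ u, Complex.exp (t * (c * inner ℝ u v : ℝ) * Complex.I)
      ∂ProbabilityTheory.stdGaussian E = exp (-((c * t) ^ 2 / 2 * ‖v‖ ^ 2)) := by
    have charFun_eq := charFun_stdGaussian ((c * t) • v)
    simp_rw [charFun_apply, real_inner_smul_right] at charFun_eq
    convert charFun_eq using 2
    · ext u
      push_cast
      ring_nf
    · rw [norm_smul, mul_pow, norm_eq_abs]
      push_cast
      rw [mul_pow, ← Complex.ofReal_pow |c * t|, sq_abs]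
      push_cast
      ring_nf
  have integrable_character : Integrable (fun p : E × E ↦
      Complex.exp (t * (c * inner ℝ p.1 p.2 : ℝ) * Complex.I))
      ((ProbabilityTheory.stdGaussian E).prod (ProbabilityTheory.stdGaussian E)) := by
    refine .of_bound (by fun_prop) 1 (.of_forall fun p ↦ ?_)
    rw [← Complex.ofReal_mul, Complex.norm_exp_ofReal_mul_I]
  rw [charFun_apply_real, integral_map (by fun_prop) (by fun_prop),
    integral_prod_symm _ integrable_character]
  simp_rw [slice]
  rw [integral_complex_ofReal, integral_exp_neg_mul_sq_norm_stdGaussian (by positivity),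
    mul_div_cancel₀ _ two_ne_zero]

lemma hasLaw_mul_inner_stdGaussian_prod [Nontrivial E] {c : ℝ} (hc : c ≠ 0) :
    HasLaw (fun p : E × E ↦ c * inner ℝ p.1 p.2)
      (volume.withDensity fun s ↦
        ENNReal.ofReal (varianceGammaPDFReal (Module.finrank ℝ E / 2) |c| s))
      ((ProbabilityTheory.stdGaussian E).prod (ProbabilityTheory.stdGaussian E)) := by
  have measurable_form : Measurable fun p : E × E ↦ c * inner ℝ p.1 p.2 := by fun_prop
  have shape_pos : (0 : ℝ) < Module.finrank ℝ E / 2 :=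
    half_pos (Nat.cast_pos.2 Module.finrank_pos)
  have scale_pos : 0 < |c| := abs_pos.2 hc
  have rate_pos : 0 < (2 * |c| ^ 2)⁻¹ := by positivity
  have := isProbabilityMeasure_gammaMeasure shape_pos rate_pos
  have := Measure.isProbabilityMeasure_map
    (μ := (ProbabilityTheory.stdGaussian E).prod (ProbabilityTheory.stdGaussian E))
    measurable_form.aemeasurable
  refine ⟨measurable_form.aemeasurable, ?_⟩
  rw [← centeredGaussianKernel_comp_gammaMeasure shape_pos scale_pos]
  refine Measure.ext_of_charFun (funext fun t ↦ ?_)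
  rw [charFun_map_mul_inner_stdGaussian_prod,
    charFun_centeredGaussianKernel_comp_gammaMeasure shape_pos scale_pos, mul_pow, mul_pow, sq_abs]

theorem stmt_3_general [Nontrivial E] {Ω : Type*} [MeasurableSpace Ω] {P : Measure Ω}
    {c : ℝ} (hc : c ≠ 0) {U V : Ω → E}
    (hU : HasLaw U (ProbabilityTheory.stdGaussian E) P)
    (hV : HasLaw V (ProbabilityTheory.stdGaussian E) P) (hUV : IndepFun U V P) :
    HasLaw (fun ω ↦ c * inner ℝ (U ω) (V ω)) (volume.withDensity fun s ↦
      ENNReal.ofReal (varianceGammaPDFReal (Module.finrank ℝ E / 2) |c| s)) P := by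
  have := hU.isProbabilityMeasure
  exact (hasLaw_mul_inner_stdGaussian_prod hc).comp (hUV.hasLaw_prod hU hV)

end StandardGaussian

lemma hasLaw_toLp_stdGaussian {Ω ι : Type*} [Fintype ι] [MeasurableSpace Ω] {P : Measure Ω}
    {U : Ω → ι → ℝ} (hU : HasLaw U (_root_.stdGaussian ι) P) :
    HasLaw (fun ω ↦ WithLp.toLp 2 (U ω))
      (ProbabilityTheory.stdGaussian (EuclideanSpace ℝ ι)) P :=
  HasLaw.comp ⟨by fun_prop, map_pi_eq_stdGaussian⟩ hU

/-- Let `n ≥ 1`, `λ > 0`, and let `U, V` be independent standard Gaussian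
random vectors on `ℝⁿ`.  Then the law of `λ U·V` has density
`f(s) = |S^{n−1}| K_{(n−1)/2}(|s|/λ) |s|^{(n−1)/2} / (2πλ)^{(n+1)/2}`, where
`|S^{n−1}| = 2π^{n/2}/Γ(n/2)`. -/
theorem stmt_3 {Ω : Type*} [MeasurableSpace Ω] (P : Measure Ω) [IsProbabilityMeasure P]
    (n : ℕ) (hn : 1 ≤ n) (lam : ℝ) (hlam : 0 < lam)
    (U V : Ω → (Fin n → ℝ)) (hU : Measurable U) (hV : Measurable V)
    (hUlaw : P.map U = stdGaussian (Fin n)) (hVlaw : P.map V = stdGaussian (Fin n))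
    (hUV : IndepFun U V P) :
    P.map (fun ω => lam * (U ω ⬝ᵥ V ω)) =
      (volume : Measure ℝ).withDensity (fun s => ENNReal.ofReal
        ((2 * π ^ ((n : ℝ) / 2) / Real.Gamma ((n : ℝ) / 2)) *
          besselK (((n : ℝ) - 1) / 2) (|s| / lam) *
          |s| ^ (((n : ℝ) - 1) / 2) / (2 * π * lam) ^ (((n : ℝ) + 1) / 2))) := by
  have : NeZero n := ⟨by lia⟩
  have law := stmt_3_general hlam.ne' (hasLaw_toLp_stdGaussian ⟨hU.aemeasurable, hUlaw⟩)
    (hasLaw_toLp_stdGaussian ⟨hV.aemeasurable, hVlaw⟩)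
    (hUV.comp (WithLp.measurable_toLp 2 _) (WithLp.measurable_toLp 2 _))
  simpa [EuclideanSpace.inner_toLp_toLp, dotProduct_comm, varianceGammaPDFReal, abs_of_pos hlam,
    sub_div, add_div] using law.map_eq
end

section
/- Let N be a symmetric positive-definite 2×2 real matrix with eigenvalues 0 < λ_1 ≤ λ_2, and let U, V be independent standard Gaussian random vectors on ℝ². Then the law of U·NV has density f(s) = (θ/2π) ∫_0^π √((1−ε²)/(1+ε cos φ)) e^{−θ|s|√(1+ε cos φ)} dφ, where ε = (λ_2² − λ_1²)/(λ_2² + λ_1²) and θ = (½(λ_1^{−2} + λ_2^{−2}))^{1/2}. -/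
open MeasureTheory ProbabilityTheory Matrix Real
open scoped ENNReal

/-!
Given `V`, the form `U ⬝ᵥ N *ᵥ V` is centered Gaussian with variance `‖N V‖²`, so its
characteristic function at `t` is the Gaussian integral of `exp (-t² ‖N v‖² / 2)`, which equals
`det (1 + t² Nᵀ N) ^ (-1/2)`. For each `φ`, the integrand of the density is a multiple of a Laplace
density of rate `θ √(1 + ε cos φ)`, whose Fourier transform is a rational function of `cos φ`.
Integrating over `φ` with `∫₀^π dφ / (a + b cos φ) = π / √(a² - b²)` gives the same
characteristic function.
-/

section StdGaussian

variable {m ι : Type*} [Fintype m] [Fintype ι]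

instance : IsProbabilityMeasure (stdGaussian ι) := by
  unfold _root_.stdGaussian
  infer_instance

theorem charFun_map_toLp_stdGaussian (w : EuclideanSpace ℝ ι) :
    charFun ((stdGaussian ι).map (WithLp.toLp 2)) w = Complex.exp (-‖w‖ ^ 2 / 2) := by
  rw [_root_.stdGaussian, map_pi_eq_stdGaussian, charFun_stdGaussian]

theorem integral_cexp_dotProduct_stdGaussian (w : ι → ℝ) :
    ∫ u, Complex.exp ((u ⬝ᵥ w : ℝ) * Complex.I) ∂stdGaussian ι =
      (Real.exp (-(w ⬝ᵥ w) / 2) : ℝ) := by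
  have h := charFun_map_toLp_stdGaussian (WithLp.toLp 2 w)
  rw [charFun_apply, integral_map (by fun_prop) (by fun_prop)] at h
  simpa [EuclideanSpace.inner_toLp_toLp, dotProduct_comm w,
    EuclideanSpace.real_norm_sq_eq, ← Complex.ofReal_pow, dotProduct, mul_comm, ← sq] using h

theorem measurePreserving_mulVec_stdGaussian [DecidableEq ι] (Q : orthogonalGroup ι ℝ) :
    MeasurePreserving (fun x => (Q : Matrix ι ι ℝ) *ᵥ x) (stdGaussian ι) (stdGaussian ι) := by
  let f : EuclideanSpace ℝ ι ≃ₗᵢ[ℝ] EuclideanSpace ℝ ι :=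
    Unitary.linearIsometryEquiv ⟨toEuclideanCLM (𝕜 := ℝ) Q.1, Unitary.map_mem _ Q.2⟩
  have hQ : Measurable fun x : ι → ℝ => (Q : Matrix ι ι ℝ) *ᵥ x := by fun_prop
  have hf : WithLp.toLp 2 ∘ (fun x => (Q : Matrix ι ι ℝ) *ᵥ x) = f ∘ WithLp.toLp 2 := by
    funext x
    exact (toEuclideanCLM_toLp Q.1 x).symm
  refine ⟨hQ, (MeasurableEquiv.toLp 2 (ι → ℝ)).map_measurableEquiv_injective ?_⟩
  rw [MeasurableEquiv.coe_toLp, Measure.map_map (by fun_prop) hQ, hf,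
    ← Measure.map_map (by fun_prop) (by fun_prop), _root_.stdGaussian, map_pi_eq_stdGaussian,
    stdGaussian_map]

-- For `r ≤ -1` both sides are `0`, by the conventions for `∫`, `√` and `⁻¹`.
theorem integral_exp_neg_mul_sq_half_gaussianReal (r : ℝ) :
    ∫ x, Real.exp (-(r * x ^ 2) / 2) ∂gaussianReal 0 1 = (√(1 + r))⁻¹ := by
  have hdensity (x : ℝ) : gaussianPDFReal 0 1 x • Real.exp (-(r * x ^ 2) / 2) =
      (√(2 * π))⁻¹ * Real.exp (-((1 + r) / 2) * x ^ 2) := by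
    rw [gaussianPDFReal, smul_eq_mul, mul_assoc, ← Real.exp_add]
    simp only [NNReal.coe_one, mul_one, sub_zero]
    ring_nf
  rw [integral_gaussianReal_eq_integral_smul one_ne_zero]
  simp_rw [hdensity]
  rw [integral_const_mul, integral_gaussian, show π / ((1 + r) / 2) = 2 * π / (1 + r) by
    rw [div_div_eq_mul_div, mul_comm], Real.sqrt_div (by positivity), ← mul_div_assoc,
    inv_mul_cancel₀ (by positivity), one_div]

theorem integral_exp_neg_sum_mul_sq_half_stdGaussian (d : ι → ℝ) :
    ∫ x, Real.exp (-(∑ i, d i * x i ^ 2) / 2) ∂stdGaussian ι = ∏ i, (√(1 + d i))⁻¹ := by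
  rw [_root_.stdGaussian]
  simp_rw [← Finset.sum_neg_distrib, Finset.sum_div, Real.exp_sum]
  rw [integral_fintype_prod_eq_prod (f := fun i x => Real.exp (-(d i * x ^ 2) / 2))]
  simp_rw [integral_exp_neg_mul_sq_half_gaussianReal]

theorem transpose_eigenvectorUnitary_mul_mul [DecidableEq ι] {A : Matrix ι ι ℝ}
    (hA : A.IsHermitian) :
    (hA.eigenvectorUnitary : Matrix ι ι ℝ)ᵀ * A * (hA.eigenvectorUnitary : Matrix ι ι ℝ) =
      diagonal hA.eigenvalues := by
  simpa [Unitary.conjStarAlgAut_apply, star_eq_conjTranspose, Function.comp_def] using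
    hA.conjStarAlgAut_star_eigenvectorUnitary

theorem dotProduct_mulVec_eigenvectorUnitary_mulVec [DecidableEq ι] {A : Matrix ι ι ℝ}
    (hA : A.IsHermitian) (x : ι → ℝ) :
    ((hA.eigenvectorUnitary : Matrix ι ι ℝ) *ᵥ x) ⬝ᵥ
        A *ᵥ ((hA.eigenvectorUnitary : Matrix ι ι ℝ) *ᵥ x) =
      ∑ i, hA.eigenvalues i * x i ^ 2 := by
  calc ((hA.eigenvectorUnitary : Matrix ι ι ℝ) *ᵥ x) ⬝ᵥ
        A *ᵥ ((hA.eigenvectorUnitary : Matrix ι ι ℝ) *ᵥ x)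
      = x ⬝ᵥ ((hA.eigenvectorUnitary : Matrix ι ι ℝ)ᵀ * A *
          (hA.eigenvectorUnitary : Matrix ι ι ℝ)) *ᵥ x := by
        rw [← mulVec_mulVec, ← mulVec_mulVec, dotProduct_mulVec x, vecMul_transpose]
    _ = x ⬝ᵥ diagonal hA.eigenvalues *ᵥ x := by rw [transpose_eigenvectorUnitary_mul_mul]
    _ = ∑ i, hA.eigenvalues i * x i ^ 2 := by
        simp only [dotProduct, mulVec_diagonal]
        exact Finset.sum_congr rfl fun i _ => by ring

theorem det_one_add_eq_prod_one_add_eigenvalues [DecidableEq ι] {A : Matrix ι ι ℝ}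
    (hA : A.IsHermitian) : (1 + A).det = ∏ i, (1 + hA.eigenvalues i) := by
  have horth : (hA.eigenvectorUnitary : Matrix ι ι ℝ)ᵀ * hA.eigenvectorUnitary = 1 := by
    simpa [star_eq_conjTranspose] using Unitary.coe_star_mul_self hA.eigenvectorUnitary
  calc (1 + A).det
      = ((hA.eigenvectorUnitary : Matrix ι ι ℝ)ᵀ * (1 + A) * hA.eigenvectorUnitary).det := by
        rw [det_mul_right_comm, horth, one_mul]
    _ = (diagonal fun i => 1 + hA.eigenvalues i).det := by
        rw [mul_add, add_mul, mul_one, horth, transpose_eigenvectorUnitary_mul_mul, ← diagonal_one,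
          diagonal_add]
    _ = ∏ i, (1 + hA.eigenvalues i) := det_diagonal

theorem integral_exp_neg_quadForm_half_stdGaussian [DecidableEq ι] {A : Matrix ι ι ℝ}
    (hA : A.PosSemidef) :
    ∫ v, Real.exp (-(v ⬝ᵥ A *ᵥ v) / 2) ∂stdGaussian ι = (√(1 + A).det)⁻¹ := by
  rw [← (measurePreserving_mulVec_stdGaussian hA.isHermitian.eigenvectorUnitary).map_eq,
    integral_map (by fun_prop) (by fun_prop)]
  simp_rw [dotProduct_mulVec_eigenvectorUnitary_mulVec hA.isHermitian]
  rw [integral_exp_neg_sum_mul_sq_half_stdGaussian,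
    det_one_add_eq_prod_one_add_eigenvalues hA.isHermitian,
    Real.sqrt_prod _ fun i _ => add_nonneg zero_le_one (hA.eigenvalues_nonneg i),
    Finset.prod_inv_distrib]

theorem charFun_map_dotProduct_mulVec [DecidableEq ι] {Ω : Type*} [MeasurableSpace Ω]
    {P : Measure Ω} (N : Matrix m ι ℝ) {U : Ω → m → ℝ} {V : Ω → ι → ℝ}
    (hU : HasLaw U (stdGaussian m) P) (hV : HasLaw V (stdGaussian ι) P) (hUV : IndepFun U V P)
    (t : ℝ) :
    charFun (P.map fun ω => U ω ⬝ᵥ N *ᵥ V ω) t = ((√(1 + t ^ 2 • (Nᵀ * N)).det)⁻¹ : ℝ) := by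
  have := hU.isProbabilityMeasure
  have hmeas : Measurable fun p : (m → ℝ) × (ι → ℝ) => p.1 ⬝ᵥ N *ᵥ p.2 := by
    unfold dotProduct
    fun_prop
  have hlaw : P.map (fun ω => U ω ⬝ᵥ N *ᵥ V ω) =
      ((stdGaussian m).prod (stdGaussian ι)).map fun p => p.1 ⬝ᵥ N *ᵥ p.2 := by
    rw [← (IndepFun.hasLaw_prod hU hV hUV).map_eq, AEMeasurable.map_map_of_aemeasurable
      hmeas.aemeasurable (by fun_prop), Function.comp_def]
  have hint : Integrable
      (fun p : (m → ℝ) × (ι → ℝ) => Complex.exp (t * (p.1 ⬝ᵥ N *ᵥ p.2 : ℝ) * Complex.I))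
      ((stdGaussian m).prod (stdGaussian ι)) := by
    refine .of_bound (C := 1) (by fun_prop) (ae_of_all _ fun p => ?_)
    rw [← Complex.ofReal_mul, Complex.norm_exp_ofReal_mul_I]
  have hcond (v : ι → ℝ) :
      ∫ u, Complex.exp (t * (u ⬝ᵥ N *ᵥ v : ℝ) * Complex.I) ∂stdGaussian m =
        (Real.exp (-(v ⬝ᵥ (t ^ 2 • (Nᵀ * N)) *ᵥ v) / 2) : ℝ) := by
    have hquad : (t • N *ᵥ v) ⬝ᵥ (t • N *ᵥ v) = v ⬝ᵥ (t ^ 2 • (Nᵀ * N)) *ᵥ v := by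
      rw [smul_mulVec, ← mulVec_mulVec, dotProduct_smul, dotProduct_smul, smul_dotProduct,
        smul_smul, ← sq, dotProduct_mulVec v, vecMul_transpose]
    rw [← hquad, ← integral_cexp_dotProduct_stdGaussian]
    simp only [dotProduct_smul, smul_eq_mul, Complex.ofReal_mul]
  have hpos : (t ^ 2 • (Nᵀ * N)).PosSemidef := by
    simpa using (posSemidef_conjTranspose_mul_self N).smul (sq_nonneg t)
  rw [hlaw, charFun_apply_real, integral_map hmeas.aemeasurable (by fun_prop),
    integral_prod_symm _ hint]
  simp_rw [hcond]
  rw [integral_complex_ofReal, integral_exp_neg_quadForm_half_stdGaussian hpos]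

end StdGaussian

-- For `k > |b|` the function is the argument of `k + b * exp (φ * I)`.
theorem hasDerivAt_arctan_mul_sin_div_add_mul_cos {k b φ : ℝ} (h : k + b * cos φ ≠ 0) :
    HasDerivAt (fun φ => arctan (b * sin φ / (k + b * cos φ)))
      (b * (b + k * cos φ) / (k ^ 2 + b ^ 2 + 2 * k * b * cos φ)) φ := by
  have hsin : HasDerivAt (fun φ => b * sin φ) (b * cos φ) φ := (hasDerivAt_sin φ).const_mul b
  have hcos : HasDerivAt (fun φ => k + b * cos φ) (b * -sin φ) φ :=
    ((hasDerivAt_cos φ).const_mul b).const_add k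
  refine (hsin.fun_div hcos h).arctan.congr_deriv ?_
  have hden : k ^ 2 + b ^ 2 + 2 * k * b * cos φ = (k + b * cos φ) ^ 2 + (b * sin φ) ^ 2 := by
    linear_combination -b ^ 2 * sin_sq_add_cos_sq φ
  have hnum : b * (b + k * cos φ) =
      b * cos φ * (k + b * cos φ) - b * sin φ * (b * -sin φ) := by
    linear_combination -b ^ 2 * sin_sq_add_cos_sq φ
  rw [hden, hnum]
  field_simp

theorem sub_abs_le_add_mul_cos (a b φ : ℝ) : a - |b| ≤ a + b * cos φ := by
  have hcos : |b * cos φ| ≤ |b| := by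
    rw [abs_mul]
    exact mul_le_of_le_one_right (abs_nonneg b) (abs_cos_le_one φ)
  linarith [neg_abs_le (b * cos φ)]

theorem add_mul_cos_pos {a b : ℝ} (h : |b| < a) (φ : ℝ) : 0 < a + b * cos φ :=
  (sub_pos.2 h).trans_le (sub_abs_le_add_mul_cos a b φ)

theorem integral_inv_add_mul_cos {a b : ℝ} (h : |b| < a) :
    ∫ φ in (0 : ℝ)..π, (a + b * cos φ)⁻¹ = π / √(a ^ 2 - b ^ 2) := by
  have hdisc : 0 < a ^ 2 - b ^ 2 := sub_pos.2 (sq_lt_sq' (neg_lt_of_abs_lt h) (lt_of_abs_lt h))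
  set s := √(a ^ 2 - b ^ 2)
  have hs : 0 < s := sqrt_pos.2 hdisc
  have hs_sq : s ^ 2 = a ^ 2 - b ^ 2 := sq_sqrt hdisc.le
  have hpos := add_mul_cos_pos h
  have hk : |b| < a + s := by linarith
  have hderiv (φ : ℝ) : HasDerivAt
      (fun φ => (φ - 2 * arctan (b * sin φ / (a + s + b * cos φ))) / s) (a + b * cos φ)⁻¹ φ := by
    have hpos' := hpos φ
    have hk0 : 0 < a + s := (abs_nonneg b).trans_lt hk
    refine (((hasDerivAt_id φ).fun_sub ((hasDerivAt_arctan_mul_sin_div_add_mul_cos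
      (add_mul_cos_pos hk φ).ne').const_mul 2)).div_const s).congr_deriv ?_
    have hden : (a + s) ^ 2 + b ^ 2 + 2 * (a + s) * b * cos φ =
        2 * (a + s) * (a + b * cos φ) := by
      linear_combination hs_sq
    rw [hden]
    field_simp
    linear_combination -hs_sq
  rw [intervalIntegral.integral_eq_sub_of_hasDerivAt (fun φ _ => hderiv φ)
    (Continuous.intervalIntegrable (.inv₀ (by fun_prop) fun φ => (hpos φ).ne') _ _)]
  simp

theorem integrable_exp_neg_mul_abs {c : ℝ} (hc : 0 < c) :
    Integrable fun s : ℝ => exp (-c * |s|) := by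
  rw [← integrableOn_univ, ← Set.Iic_union_Ioi (a := (0 : ℝ))]
  refine .union ?_ ?_
  · refine (integrableOn_exp_mul_Iic hc 0).congr_fun (fun s hs => ?_) measurableSet_Iic
    simp only [abs_of_nonpos (Set.mem_Iic.1 hs), neg_mul_neg]
  · refine (integrableOn_exp_mul_Ioi (neg_neg_of_pos hc) 0).congr_fun (fun s hs => ?_)
      measurableSet_Ioi
    simp only [abs_of_pos (Set.mem_Ioi.1 hs)]

theorem integrable_ofReal_mul_cexp {α : Type*} [MeasurableSpace α] {μ : Measure α} {f g : α → ℝ}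
    (hf : Integrable f μ) (hg : AEMeasurable g μ) (t : ℝ) :
    Integrable (fun x => (f x : ℂ) * Complex.exp (t * g x * Complex.I)) μ := by
  refine hf.ofReal.mul_bdd (c := 1) (by fun_prop) (ae_of_all _ fun x => ?_)
  rw [← Complex.ofReal_mul, Complex.norm_exp_ofReal_mul_I]

theorem integral_exp_neg_mul_abs_mul_cexp {c : ℝ} (hc : 0 < c) (t : ℝ) :
    ∫ s : ℝ, (exp (-c * |s|) : ℂ) * Complex.exp (t * s * Complex.I) =
      (2 * c / (c ^ 2 + t ^ 2) : ℝ) := by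
  have hint : Integrable fun s : ℝ => (exp (-c * |s|) : ℂ) * Complex.exp (t * s * Complex.I) := by
    simpa only [Complex.ofReal_exp, Complex.ofReal_mul, Complex.ofReal_neg, id] using
      integrable_ofReal_mul_cexp (integrable_exp_neg_mul_abs hc) aemeasurable_id t
  have hneg : ∫ s in Set.Iic (0 : ℝ), (exp (-c * |s|) : ℂ) * Complex.exp (t * s * Complex.I) =
      1 / (c + t * Complex.I) := by
    rw [setIntegral_congr_fun (g := fun s : ℝ => Complex.exp ((c + t * Complex.I) * s))
      measurableSet_Iic fun s hs => ?_, integral_exp_mul_complex_Iic (by simpa using hc)]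
    · simp
    · simp only [abs_of_nonpos (Set.mem_Iic.1 hs), neg_mul_neg]
      push_cast
      rw [← Complex.exp_add]
      ring_nf
  have hpos : ∫ s in Set.Ioi (0 : ℝ), (exp (-c * |s|) : ℂ) * Complex.exp (t * s * Complex.I) =
      1 / (c - t * Complex.I) := by
    rw [setIntegral_congr_fun (g := fun s : ℝ => Complex.exp (-(c - t * Complex.I) * s))
      measurableSet_Ioi fun s hs => ?_, integral_exp_mul_complex_Ioi (by simpa using hc)]
    · simp only [Complex.ofReal_zero, mul_zero, Complex.exp_zero, neg_div_neg_eq]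
    · simp only [abs_of_pos (Set.mem_Ioi.1 hs)]
      push_cast
      rw [← Complex.exp_add]
      ring_nf
  have hadd : (c + t * Complex.I : ℂ) ≠ 0 := fun h => hc.ne' (by simpa using congrArg Complex.re h)
  have hsub : (c - t * Complex.I : ℂ) ≠ 0 := fun h => hc.ne' (by simpa using congrArg Complex.re h)
  have hfactor : (c ^ 2 + t ^ 2 : ℂ) = (c + t * Complex.I) * (c - t * Complex.I) := by
    linear_combination (t ^ 2 : ℂ) * Complex.I_sq
  rw [← intervalIntegral.integral_Iic_add_Ioi hint.integrableOn hint.integrableOn,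
    hneg, hpos]
  push_cast
  rw [hfactor]
  field_simp
  ring

theorem charFun_withDensity_ofReal {f : ℝ → ℝ} (hf : Integrable f) (hf₀ : ∀ s, 0 ≤ f s) (t : ℝ) :
    charFun (volume.withDensity fun s => ENNReal.ofReal (f s)) t =
      ∫ s : ℝ, (f s : ℂ) * Complex.exp (t * s * Complex.I) := by
  rw [charFun_apply_real, integral_withDensity_eq_integral_toReal_smul₀
    hf.aemeasurable.ennreal_ofReal (ae_of_all _ fun _ => ENNReal.ofReal_lt_top)]
  simp_rw [ENNReal.toReal_ofReal (hf₀ _), Complex.real_smul]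

section LaplaceMixture

variable {α : Type*} [MeasurableSpace α] {ν : Measure α} {w c : α → ℝ} {c₀ : ℝ}

/-- The mixture over `ν` of two-sided exponential profiles `exp (-c a * |s|)` with weights `w a`.
The weights are not normalized: `c / 2 * exp (-c * |s|)` is the Laplace density of rate `c`. -/
noncomputable def laplaceMixture (ν : Measure α) (w c : α → ℝ) (s : ℝ) : ℝ :=
  ∫ a, w a * exp (-(c a) * |s|) ∂ν

theorem integrable_laplaceMixture_integrand [SFinite ν] (hw : Integrable w ν)
    (hc : AEMeasurable c ν) (hc₀ : 0 < c₀) (hc₀c : ∀ a, c₀ ≤ c a) :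
    Integrable (fun p : ℝ × α => w p.2 * exp (-(c p.2) * |p.1|)) (volume.prod ν) := by
  have hexp : AEMeasurable (fun p : ℝ × α => exp (-(c p.2) * |p.1|)) (volume.prod ν) :=
    (hc.comp_snd.neg.mul measurable_fst.norm.aemeasurable).exp
  have hmeas : AEStronglyMeasurable (fun p : ℝ × α => w p.2 * exp (-(c p.2) * |p.1|))
      (volume.prod ν) := hw.1.comp_snd.mul hexp.aestronglyMeasurable
  refine ((integrable_exp_neg_mul_abs hc₀).mul_prod hw.norm).mono' hmeas
    (ae_of_all _ fun p => ?_)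
  rw [norm_mul, norm_of_nonneg (exp_nonneg _), mul_comm]
  gcongr
  exact hc₀c p.2

theorem integrable_laplaceMixture [SFinite ν] (hw : Integrable w ν)
    (hc : AEMeasurable c ν) (hc₀ : 0 < c₀) (hc₀c : ∀ a, c₀ ≤ c a) :
    Integrable (laplaceMixture ν w c) :=
  (integrable_laplaceMixture_integrand hw hc hc₀ hc₀c).integral_prod_left

theorem integral_laplaceMixture_mul_cexp [SFinite ν] (hw : Integrable w ν)
    (hc : AEMeasurable c ν) (hc₀ : 0 < c₀) (hc₀c : ∀ a, c₀ ≤ c a) (t : ℝ) :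
    ∫ s : ℝ, (laplaceMixture ν w c s : ℂ) * Complex.exp (t * s * Complex.I) =
      (∫ a, w a * (2 * c a / (c a ^ 2 + t ^ 2)) ∂ν : ℝ) := by
  have hint := integrable_ofReal_mul_cexp (integrable_laplaceMixture_integrand hw hc hc₀ hc₀c)
    measurable_fst.aemeasurable t
  simp_rw [laplaceMixture, ← integral_complex_ofReal, ← integral_mul_const]
  rw [integral_integral_swap hint]
  congr with a
  push_cast
  simp_rw [mul_assoc, integral_const_mul]
  have := integral_exp_neg_mul_abs_mul_cexp (hc₀.trans_le (hc₀c a)) t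
  push_cast [mul_assoc] at this
  rw [this]

theorem charFun_withDensity_laplaceMixture [SFinite ν] (hw : Integrable w ν) (hw₀ : ∀ a, 0 ≤ w a)
    (hc : AEMeasurable c ν) (hc₀ : 0 < c₀) (hc₀c : ∀ a, c₀ ≤ c a) (t : ℝ) :
    charFun (volume.withDensity fun s => ENNReal.ofReal (laplaceMixture ν w c s)) t =
      (∫ a, w a * (2 * c a / (c a ^ 2 + t ^ 2)) ∂ν : ℝ) := by
  rw [charFun_withDensity_ofReal (integrable_laplaceMixture hw hc hc₀ hc₀c)
    (fun s => integral_nonneg fun a => mul_nonneg (hw₀ a) (exp_nonneg _)),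
    integral_laplaceMixture_mul_cexp hw hc hc₀ hc₀c]

end LaplaceMixture

section BilinearGaussianDensity

variable {θ ε : ℝ}

/-- The density of the bilinear form `U ⬝ᵥ N *ᵥ V` in independent standard Gaussian vectors, where
`V` is planar; `θ` and `ε` encode the singular values `σ₁`, `σ₂` of `N` through
`θ ^ 2 * (1 + ε) = σ₁⁻¹ ^ 2` and `θ ^ 2 * (1 - ε) = σ₂⁻¹ ^ 2`. -/
noncomputable def bilinearGaussianDensity (θ ε s : ℝ) : ℝ :=
  (θ / (2 * π)) * ∫ φ in (0 : ℝ)..π,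
    √((1 - ε ^ 2) / (1 + ε * cos φ)) * exp (-θ * |s| * √(1 + ε * cos φ))

theorem bilinearGaussianDensity_eq_laplaceMixture (θ ε : ℝ) :
    bilinearGaussianDensity θ ε = laplaceMixture (volume.restrict (Set.Ioc 0 π))
      (fun φ => θ / (2 * π) * √((1 - ε ^ 2) / (1 + ε * cos φ)))
      (fun φ => θ * √(1 + ε * cos φ)) := by
  funext s
  rw [bilinearGaussianDensity, laplaceMixture, intervalIntegral.integral_of_le pi_nonneg,
    ← integral_const_mul]
  congr with φ
  ring_nf

theorem integrable_bilinearGaussianDensity_weight (θ : ℝ) (hε : |ε| < 1) :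
    Integrable (fun φ => θ / (2 * π) * √((1 - ε ^ 2) / (1 + ε * cos φ)))
      (volume.restrict (Set.Ioc 0 π)) :=
  Continuous.integrableOn_Ioc <| continuous_const.mul <| continuous_sqrt.comp <|
    continuous_const.div (by fun_prop) fun φ => (add_mul_cos_pos hε φ).ne'

theorem mul_sqrt_one_sub_abs_le (hθ : 0 ≤ θ) (ε φ : ℝ) :
    θ * √(1 - |ε|) ≤ θ * √(1 + ε * cos φ) :=
  mul_le_mul_of_nonneg_left (sqrt_le_sqrt (sub_abs_le_add_mul_cos 1 ε φ)) hθ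

theorem integrable_bilinearGaussianDensity (hθ : 0 < θ) (hε : |ε| < 1) :
    Integrable (bilinearGaussianDensity θ ε) := by
  rw [bilinearGaussianDensity_eq_laplaceMixture]
  exact integrable_laplaceMixture (integrable_bilinearGaussianDensity_weight θ hε) (by fun_prop)
    (mul_pos hθ (sqrt_pos.2 (sub_pos.2 hε))) (mul_sqrt_one_sub_abs_le hθ.le ε)

theorem integral_bilinearGaussianDensity_weight_mul (hθ : 0 < θ) (hε : |ε| < 1) (t : ℝ) :
    ∫ φ in Set.Ioc 0 π, θ / (2 * π) * √((1 - ε ^ 2) / (1 + ε * cos φ)) *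
        (2 * (θ * √(1 + ε * cos φ)) / ((θ * √(1 + ε * cos φ)) ^ 2 + t ^ 2)) =
      θ ^ 2 * √(1 - ε ^ 2) / √((θ ^ 2 + t ^ 2) ^ 2 - (θ ^ 2 * ε) ^ 2) := by
  have hε_sq : 0 ≤ 1 - ε ^ 2 := sub_nonneg.2 ((sq_le_one_iff_abs_le_one ε).2 hε.le)
  have hab : |θ ^ 2 * ε| < θ ^ 2 + t ^ 2 := by
    rw [abs_mul, abs_of_nonneg (sq_nonneg θ)]
    nlinarith [sq_pos_of_pos hθ, sq_nonneg t]
  have hpoint (φ : ℝ) : θ / (2 * π) * √((1 - ε ^ 2) / (1 + ε * cos φ)) *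
        (2 * (θ * √(1 + ε * cos φ)) / ((θ * √(1 + ε * cos φ)) ^ 2 + t ^ 2)) =
      θ ^ 2 * √(1 - ε ^ 2) / π * (θ ^ 2 + t ^ 2 + θ ^ 2 * ε * cos φ)⁻¹ := by
    have hx := add_mul_cos_pos hε φ
    have hden : θ ^ 2 + t ^ 2 + θ ^ 2 * ε * cos φ = θ ^ 2 * (1 + ε * cos φ) + t ^ 2 := by ring
    rw [hden, sqrt_div hε_sq, mul_pow, sq_sqrt hx.le]
    field_simp
  simp_rw [hpoint]
  rw [integral_const_mul, ← intervalIntegral.integral_of_le pi_nonneg,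
    integral_inv_add_mul_cos hab]
  field_simp

theorem charFun_withDensity_bilinearGaussianDensity (hθ : 0 < θ) (hε : |ε| < 1) (t : ℝ) :
    charFun (volume.withDensity fun s => ENNReal.ofReal (bilinearGaussianDensity θ ε s)) t =
      (θ ^ 2 * √(1 - ε ^ 2) / √((θ ^ 2 + t ^ 2) ^ 2 - (θ ^ 2 * ε) ^ 2) : ℝ) := by
  rw [bilinearGaussianDensity_eq_laplaceMixture, charFun_withDensity_laplaceMixture
    (integrable_bilinearGaussianDensity_weight θ hε) (fun φ => by positivity) (by fun_prop)
    (mul_pos hθ (sqrt_pos.2 (sub_pos.2 hε))) (mul_sqrt_one_sub_abs_le hθ.le ε),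
    integral_bilinearGaussianDensity_weight_mul hθ hε]

end BilinearGaussianDensity

theorem det_one_add_smul_fin_two {R : Type*} [CommRing R] (c : R) (A : Matrix (Fin 2) (Fin 2) R) :
    (1 + c • A).det = 1 + c * A.trace + c ^ 2 * A.det := by
  simp only [det_fin_two, trace_fin_two, Matrix.add_apply, Matrix.smul_apply, one_apply_eq,
    smul_eq_mul, one_apply_ne zero_ne_one, one_apply_ne one_ne_zero]
  ring

theorem trace_transpose_mul_self_fin_two {R : Type*} [CommRing R] {N : Matrix (Fin 2) (Fin 2) R}
    (hN : N.IsSymm) : (Nᵀ * N).trace = N.trace ^ 2 - 2 * N.det := by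
  have h : N 0 1 = N 1 0 := hN.apply 1 0
  simp only [hN.eq, trace_fin_two, det_fin_two, mul_apply, Fin.sum_univ_two, h]
  ring

theorem abs_sub_div_add_lt_one {a b : ℝ} (ha : 0 < a) (hb : 0 < b) : |(b - a) / (b + a)| < 1 := by
  rw [abs_lt, lt_div_iff₀ (by positivity), div_lt_one (by positivity)]
  constructor <;> linarith

theorem sq_mul_sqrt_div_sqrt_eq_inv_sqrt {σ₁ σ₂ θ ε : ℝ} (hσ₁ : σ₁ ≠ 0) (hσ₂ : σ₂ ≠ 0)
    (hplus : θ ^ 2 * (1 + ε) = σ₁⁻¹ ^ 2) (hminus : θ ^ 2 * (1 - ε) = σ₂⁻¹ ^ 2) (t : ℝ) :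
    θ ^ 2 * √(1 - ε ^ 2) / √((θ ^ 2 + t ^ 2) ^ 2 - (θ ^ 2 * ε) ^ 2) =
      (√(1 + t ^ 2 * (σ₁ ^ 2 + σ₂ ^ 2) + (t ^ 2) ^ 2 * (σ₁ ^ 2 * σ₂ ^ 2)))⁻¹ := by
  have hnum : (θ ^ 2) ^ 2 * (1 - ε ^ 2) = σ₁⁻¹ ^ 2 * σ₂⁻¹ ^ 2 := by
    rw [← hplus, ← hminus]
    ring
  have hden : (θ ^ 2 + t ^ 2) ^ 2 - (θ ^ 2 * ε) ^ 2 =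
      (σ₁⁻¹ ^ 2 + t ^ 2) * (σ₂⁻¹ ^ 2 + t ^ 2) := by
    rw [← hplus, ← hminus]
    ring
  rw [← sqrt_sq (sq_nonneg θ), ← sqrt_mul (by positivity), sqrt_sq (sq_nonneg θ), hnum, hden,
    ← sqrt_div (by positivity), ← sqrt_inv]
  congr 1
  field_simp
  ring

-- The trace and determinant hypotheses say that `|σ₁|` and `|σ₂|` are the singular values of `N`.
theorem stmt_5_general {Ω m : Type*} [MeasurableSpace Ω] [Fintype m] {P : Measure Ω}
    (N : Matrix m (Fin 2) ℝ) {σ₁ σ₂ : ℝ} (hσ₁ : σ₁ ≠ 0) (hσ₂ : σ₂ ≠ 0)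
    (htr : (Nᵀ * N).trace = σ₁ ^ 2 + σ₂ ^ 2) (hdet : (Nᵀ * N).det = σ₁ ^ 2 * σ₂ ^ 2)
    {U : Ω → m → ℝ} {V : Ω → Fin 2 → ℝ} (hU : HasLaw U (stdGaussian m) P)
    (hV : HasLaw V (stdGaussian (Fin 2)) P) (hUV : IndepFun U V P) :
    let ε : ℝ := (σ₂ ^ 2 - σ₁ ^ 2) / (σ₂ ^ 2 + σ₁ ^ 2)
    let θ : ℝ := √((1 / 2) * (σ₁⁻¹ ^ 2 + σ₂⁻¹ ^ 2))
    P.map (fun ω => U ω ⬝ᵥ N *ᵥ V ω) =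
      volume.withDensity fun s => ENNReal.ofReal (bilinearGaussianDensity θ ε s) := by
  intro ε θ
  have hε : |ε| < 1 := abs_sub_div_add_lt_one (by positivity) (by positivity)
  have hθ : 0 < θ := sqrt_pos.2 (by positivity)
  have hθ_sq : θ ^ 2 = (1 / 2) * (σ₁⁻¹ ^ 2 + σ₂⁻¹ ^ 2) := sq_sqrt (by positivity)
  have hplus : θ ^ 2 * (1 + ε) = σ₁⁻¹ ^ 2 := by
    rw [hθ_sq]
    simp only [ε]
    field_simp
    ring
  have hminus : θ ^ 2 * (1 - ε) = σ₂⁻¹ ^ 2 := by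
    rw [hθ_sq]
    simp only [ε]
    field_simp
    ring
  have := hU.isProbabilityMeasure
  have := isFiniteMeasure_withDensity_ofReal (integrable_bilinearGaussianDensity hθ hε).2
  refine Measure.ext_of_charFun (funext fun t => ?_)
  rw [charFun_map_dotProduct_mulVec N hU hV hUV, det_one_add_smul_fin_two, htr, hdet,
    charFun_withDensity_bilinearGaussianDensity hθ hε,
    sq_mul_sqrt_div_sqrt_eq_inv_sqrt hσ₁ hσ₂ hplus hminus]

/-- Let `N` be a symmetric positive-definite `2×2` real matrix with
eigenvalues `0 < λ₁ ≤ λ₂` (equivalently: `tr N = λ₁ + λ₂` and `det N = λ₁λ₂`), and let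
`U, V` be independent standard Gaussian random vectors on `ℝ²`.  Then the law of `U·NV`
has density `f(s) = (θ/2π) ∫_0^π √((1−ε²)/(1+ε cos φ)) e^{−θ|s|√(1+ε cos φ)} dφ`,
where `ε = (λ₂² − λ₁²)/(λ₂² + λ₁²)` and `θ = (½(λ₁^{−2} + λ₂^{−2}))^{1/2}`. -/
theorem stmt_5 {Ω : Type*} [MeasurableSpace Ω] (P : Measure Ω) [IsProbabilityMeasure P]
    (N : Matrix (Fin 2) (Fin 2) ℝ) (hN : N.PosDef)
    (lam₁ lam₂ : ℝ) (hlam₁ : 0 < lam₁) (hlam₁₂ : lam₁ ≤ lam₂)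
    (htr : N.trace = lam₁ + lam₂) (hdet : N.det = lam₁ * lam₂)
    (U V : Ω → (Fin 2 → ℝ)) (hU : Measurable U) (hV : Measurable V)
    (hUlaw : P.map U = stdGaussian (Fin 2)) (hVlaw : P.map V = stdGaussian (Fin 2))
    (hUV : IndepFun U V P) :
    let ε : ℝ := (lam₂ ^ 2 - lam₁ ^ 2) / (lam₂ ^ 2 + lam₁ ^ 2)
    let θ : ℝ := Real.sqrt ((1 / 2) * (lam₁⁻¹ ^ 2 + lam₂⁻¹ ^ 2))
    P.map (fun ω => U ω ⬝ᵥ N *ᵥ V ω) =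
      (volume : Measure ℝ).withDensity (fun s => ENNReal.ofReal
        ((θ / (2 * π)) * ∫ φ in (0 : ℝ)..π,
          Real.sqrt ((1 - ε ^ 2) / (1 + ε * Real.cos φ)) *
            Real.exp (-θ * |s| * Real.sqrt (1 + ε * Real.cos φ)))) := by
  have htr' : (Nᵀ * N).trace = lam₁ ^ 2 + lam₂ ^ 2 := by
    rw [trace_transpose_mul_self_fin_two (isHermitian_iff_isSymm.1 hN.isHermitian), htr, hdet]
    ring
  have hdet' : (Nᵀ * N).det = lam₁ ^ 2 * lam₂ ^ 2 := by
    rw [det_mul, det_transpose, hdet]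
    ring
  exact stmt_5_general N hlam₁.ne' (hlam₁.trans_le hlam₁₂).ne' htr' hdet'
    ⟨hU.aemeasurable, hUlaw⟩ ⟨hV.aemeasurable, hVlaw⟩ hUV
end
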